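/- Let n ≥ 2, let r be an odd prime with r > n, let ζ = exp(2πi/r), and let b be an integer not divisible by r. Then G(b) = (|b|/r)^{n−1} · ζ^{c} · G(sgn(b)), where sgn(b) ∈ {1,−1} is the sign of b and c is any integer satisfying 4c ≡ (sgn(b)−b)·n(n²−1)/6 (mod r). -/

import Mathlib

/-!
Let `F = ZMod r`, `ψ` the standard additive character, so that `ζ ^ m = ψ m`, and let `A` be the
Cartan matrix over `F`. With `ρ i = (i + 1) (n - 1 - i) / 2` one has `A ρ = (1, …, 1)`, so completing
the square gives `kᵗAk / 2 + ∑ k_i = ((k + ρ)ᵗA(k + ρ) - ∑ ρ_i) / 2` and hence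
`G(b) = ψ(-b/2 · ∑ ρ_i) · S(b/2)`, where `S(a) = ∑_k ψ(a · kᵗAk)` (`gaussG_eq`). Moreover
`2 ∑ ρ_i = n (n² - 1) / 6`, which accounts for `c`.

It remains to see that `S(a d) = χ(a)^{n-1} S(d)` for nonzero `a`, `d`, with `χ` the quadratic
character; this is used for `a = |b|` and `d = sgn(b) / 2`. As `n < r`, the
kernel of `A` over `F` is trivial, because `A x = 0` is a linear recurrence forcing `x` to be an
arithmetic progression that vanishes at both ends (`det_cartan_ne_zero`). A nondegenerate form over
a field of odd characteristic is equivalent to `∑ w_i y_i²` with all `w_i ≠ 0`, so `S` is a product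
of `n - 1` one-variable sums `∑_x ψ(a w_i x²)` (`sum_matrix`), each of which is `χ(a w_i)` times a
fixed Gauss sum (`sum_sq_eq`).
-/

open scoped BigOperators

/-- `ζ = exp(2πi/r)`. -/
noncomputable def zetaC (r : ℕ) : ℂ := Complex.exp (2 * Real.pi * Complex.I / r)

/-- The `(n-1)×(n-1)` Cartan matrix of `sl_n`. -/
def cartan (n : ℕ) : Matrix (Fin (n - 1)) (Fin (n - 1)) ℤ :=
  Matrix.of fun i j =>
    if (i : ℕ) = (j : ℕ) then 2
    else if (i : ℕ) + 1 = (j : ℕ) ∨ (j : ℕ) + 1 = (i : ℕ) then -1 else 0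

/-- The quadratic form `kᵗAk` attached to the Cartan matrix of `sl_n`. -/
def qf (n : ℕ) (k : Fin (n - 1) → ℤ) : ℤ := ∑ i, ∑ j, k i * cartan n i j * k j

/-- The Gauss sum on the root lattice of `sl_n`:
`G(b) = ∑_{k ∈ {0,…,r−1}^{n−1}} ζ^{b(kᵗAk/2 + ∑ k_i)}`. -/
noncomputable def gaussG (n r : ℕ) (b : ℤ) : ℂ :=
  ∑ k : Fin (n - 1) → Fin r,
    zetaC r ^ (b * (qf n (fun i => ((k i : ℕ) : ℤ)) / 2 + ∑ i, ((k i : ℕ) : ℤ)))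

/-! ### Gauss sums of quadratic forms over a finite field -/

theorem addChar_sum {F ι : Type*} [Field F] (s : Finset ι) (ψ : AddChar F ℂ) (g : ι → F) :
    ψ (∑ i ∈ s, g i) = ∏ i ∈ s, ψ (g i) := by
  classical
  induction s using Finset.induction_on with
  | empty => simp
  | insert i s hi ih => rw [Finset.sum_insert hi, Finset.prod_insert hi, AddChar.map_add_eq_mul, ih]

section GaussSums

variable {F : Type*} [Field F] [Fintype F] [DecidableEq F]

/-- The fibre of `x ↦ x ^ 2` over `y` has `χ y + 1` elements; the term `1` contributes a full
character sum, which vanishes. -/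
theorem sum_sq_eq (hF : ringChar F ≠ 2) (ψ : AddChar F ℂ) (hψ : ψ.IsPrimitive) {a : F}
    (ha : a ≠ 0) :
    ∑ x : F, ψ (a * x ^ 2) =
      ((quadraticChar F a : ℤ) : ℂ) * ∑ y : F, ((quadraticChar F y : ℤ) : ℂ) * ψ y := by
  have h1 : ∑ x : F, ψ (a * x ^ 2) = ∑ y : F, (((quadraticChar F y : ℤ) : ℂ) + 1) * ψ (a * y) := by
    rw [← Finset.sum_fiberwise (s := Finset.univ) (g := fun x : F => x ^ 2)]
    refine Finset.sum_congr rfl fun y _ => ?_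
    have hc := quadraticChar_card_sqrts hF y
    rw [Finset.sum_congr rfl (g := fun _ => ψ (a * y))
      (fun x hx => by rw [(Finset.mem_filter.1 hx).2]), Finset.sum_const, nsmul_eq_mul]
    congr 1
    have : (Finset.univ.filter fun x : F => x ^ 2 = y) = {x : F | x ^ 2 = y}.toFinset := by
      ext; simp
    rw [this]
    exact_mod_cast congrArg (Int.cast : ℤ → ℂ) hc
  have h2 : ∑ y : F, ψ (a * y) = 0 := by
    have := AddChar.sum_mulShift a hψ
    simpa [mul_comm, ha] using this
  rw [h1]
  simp only [add_mul, one_mul, Finset.sum_add_distrib, h2, add_zero]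
  rw [← Equiv.sum_comp (Equiv.mulLeft₀ a ha)
    (fun y => ((quadraticChar F y : ℤ) : ℂ) * ψ y), Finset.mul_sum]
  refine Finset.sum_congr rfl fun y _ => ?_
  have h3 : ((quadraticChar F a : ℤ) : ℂ) * ((quadraticChar F a : ℤ) : ℂ) = 1 := by
    have := quadraticChar_sq_one ha
    rw [sq] at this
    exact_mod_cast this
  simp only [Equiv.mulLeft₀_apply, map_mul, Int.cast_mul]
  linear_combination (-((quadraticChar F y : ℤ) : ℂ) * ψ (a * y)) * h3

theorem sum_sq_mul (hF : ringChar F ≠ 2) (ψ : AddChar F ℂ) (hψ : ψ.IsPrimitive) {a c : F}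
    (ha : a ≠ 0) (hc : c ≠ 0) :
    ∑ x : F, ψ (a * c * x ^ 2) = ((quadraticChar F a : ℤ) : ℂ) * ∑ x : F, ψ (c * x ^ 2) := by
  rw [sum_sq_eq hF ψ hψ (mul_ne_zero ha hc), sum_sq_eq hF ψ hψ hc, map_mul, Int.cast_mul, mul_assoc]

/-- Gauss sums of a nondegenerate quadratic form, by diagonalization. -/
theorem sum_matrix (hF : ringChar F ≠ 2) (ψ : AddChar F ℂ) (hψ : ψ.IsPrimitive) {m : ℕ}
    (M : Matrix (Fin m) (Fin m) F) (hM : M.IsSymm) (hdet : M.det ≠ 0) {a c : F}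
    (ha : a ≠ 0) (hc : c ≠ 0) :
    ∑ k : Fin m → F, ψ (a * c * (k ⬝ᵥ M.mulVec k)) =
      ((quadraticChar F a : ℤ) : ℂ) ^ m * ∑ k : Fin m → F, ψ (c * (k ⬝ᵥ M.mulVec k)) := by
  have : Invertible (2 : F) := invertibleOfNonzero (Ring.two_ne_zero hF)
  let B : LinearMap.BilinMap F (Fin m → F) F := Matrix.toLinearMap₂' F M
  have hB : ∀ x y, B x y = x ⬝ᵥ M.mulVec y := Matrix.toLinearMap₂'_apply' M
  have hsymm : ∀ x y, B x y = B y x := fun x y => by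
    rw [hB, hB, Matrix.dotProduct_mulVec, ← Matrix.mulVec_transpose, hM.eq, dotProduct_comm]
  let Q : QuadraticForm F (Fin m → F) := LinearMap.BilinMap.toQuadraticMap B
  have hQ : ∀ k, Q k = k ⬝ᵥ M.mulVec k := fun k => hB k k
  have hsep : (QuadraticMap.associated (R := F) Q).SeparatingLeft := by
    have : QuadraticMap.associated (R := F) Q = B := QuadraticMap.associated_left_inverse F hsymm
    rw [this]
    exact LinearMap.separatingLeft_toLinearMap₂'_of_det_ne_zero' hdet
  obtain ⟨w, ⟨e⟩⟩ := Q.equivalent_weightedSumSquares_units_of_nondegenerate' hsep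
  have key : ∀ d : F, ∑ k : Fin m → F, ψ (d * (k ⬝ᵥ M.mulVec k)) =
      ∏ i, ∑ x : F, ψ (d * w i * x ^ 2) := fun d => by
    rw [Fintype.prod_sum, ← Equiv.sum_comp e.toEquiv]
    refine Finset.sum_congr rfl fun k _ => ?_
    have h := e.map_app k
    rw [← hQ, ← h, QuadraticMap.weightedSumSquares_apply, Finset.mul_sum, addChar_sum]
    refine Finset.prod_congr rfl fun i _ => ?_
    congr 1
    simp only [Units.smul_def, smul_eq_mul]
    change _ = d * w i * (e k i) ^ 2
    ring
  rw [key, key]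
  simp_rw [mul_assoc a c, fun i => sum_sq_mul hF ψ hψ ha (mul_ne_zero hc (w i).ne_zero)]
  have hm : Fintype.card (Fin (Module.finrank F (Fin m → F))) = m := by simp
  rw [Finset.prod_mul_distrib, Finset.prod_const, Finset.card_univ, hm]

end GaussSums

/-! ### The Cartan matrix of `sl_n` -/

section Cartan

variable {R : Type*} [CommRing R]

/-- The Cartan matrix acts as the negative discrete Laplacian on sequences vanishing at `0`
and `n`. -/
theorem cartan_row (n : ℕ) (f : ℕ → R) (h0 : f 0 = 0) (hn : f n = 0) (i : Fin (n - 1)) :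
    ∑ j : Fin (n - 1), ((cartan n i j : ℤ) : R) * f (j + 1) = 2 * f (i + 1) - f i - f (i + 2) := by
  obtain ⟨i, hi⟩ := i
  have e : ∀ j : ℕ, (((if i = j then 2 else if i + 1 = j ∨ j + 1 = i then -1 else 0 : ℤ)) : R)
      * f (j + 1) = ((if i = j then 2 * f (i + 1) else 0) - (if i + 1 = j then f (i + 2) else 0))
        - (if i = j + 1 then f i else 0) := fun j => by
    rcases lt_trichotomy i j with h | h | h
    · by_cases h' : i + 1 = j
      · subst h'
        have h1 : i ≠ i + 1 + 1 := by omega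
        simp [h1]
      · have h1 : j + 1 ≠ i := by omega
        simp [h.ne, h', h1, h1.symm]
    · subst h; simp
    · by_cases h' : j + 1 = i
      · subst h'
        have h1 : j + 1 + 1 ≠ j := by omega
        simp [h1]
      · have h1 : i + 1 ≠ j := by omega
        simp [h.ne', h', h1, Ne.symm h']
  simp only [cartan, Matrix.of_apply]
  rw [Fin.sum_univ_eq_sum_range (fun j => (((if i = j then 2 else if i + 1 = j ∨ j + 1 = i then -1
      else 0 : ℤ)) : R) * f (j + 1)) (n - 1)]
  simp_rw [e, Finset.sum_sub_distrib, Finset.sum_ite_eq, Finset.mem_range, if_pos hi]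
  have e1 : (if i + 1 < n - 1 then f (i + 2) else 0) = f (i + 2) := by
    split_ifs with h
    · rfl
    · rw [show i + 2 = n by omega, hn]
  have e2 : ∑ j ∈ Finset.range (n - 1), (if i = j + 1 then f i else 0) = f i := by
    rcases i with _ | i
    · simp [h0]
    · simp only [add_left_inj, Finset.sum_ite_eq, Finset.mem_range]
      rw [if_pos (by omega)]
  rw [e1, e2]
  ring

/-- The sequence `0, x_0, …, x_{n-2}, 0, 0, …`. -/
def padSeq (n : ℕ) (x : Fin (n - 1) → R) (m : ℕ) : R :=
  if h : 1 ≤ m ∧ m - 1 < n - 1 then x ⟨m - 1, h.2⟩ else 0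

theorem padSeq_succ (n : ℕ) (x : Fin (n - 1) → R) (i : Fin (n - 1)) :
    padSeq n x (i + 1) = x i := by
  simp [padSeq]

/-- The Cartan matrix of `sl_n` over `R`. -/
def cartanR (R : Type*) [CommRing R] (n : ℕ) : Matrix (Fin (n - 1)) (Fin (n - 1)) R :=
  (cartan n).map (Int.cast : ℤ → R)

theorem cartanR_isSymm (n : ℕ) : (cartanR R n).IsSymm := by
  ext i j
  simp only [cartanR, cartan, Matrix.transpose_apply, Matrix.map_apply, Matrix.of_apply]
  simp only [eq_comm (a := (j : ℕ)) (b := (i : ℕ)), or_comm]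

theorem det_cartan_ne_zero {F : Type*} [Field F] (n : ℕ) (hn : (n : F) ≠ 0) :
    (cartanR F n).det ≠ 0 := by
  intro h
  obtain ⟨v, hv, h⟩ := Matrix.exists_mulVec_eq_zero_iff.2 h
  have h0 : padSeq n v 0 = 0 := by simp [padSeq]
  have hN : padSeq n v n = 0 := by simp [padSeq]
  have rec' : ∀ i, i + 1 < n → padSeq n v (i + 2) = 2 * padSeq n v (i + 1) - padSeq n v i :=
    fun i hi => by
      have h1 := cartan_row n (padSeq n v) h0 hN ⟨i, by omega⟩
      have h2 := congrFun h ⟨i, by omega⟩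
      simp only [Matrix.mulVec, dotProduct, cartanR, Matrix.map_apply, Pi.zero_apply] at h2
      simp only [padSeq_succ] at h1
      rw [h2] at h1
      linear_combination h1
  have prog : ∀ m, m ≤ n → padSeq n v m = m * padSeq n v 1 ∧
      (m + 1 ≤ n → padSeq n v (m + 1) = (m + 1 : ℕ) * padSeq n v 1) := fun m => by
    induction m with
    | zero => intro; simp [h0]
    | succ m ih =>
      intro hm
      obtain ⟨i1, i2⟩ := ih (by omega)
      refine ⟨i2 hm, fun hm' => ?_⟩
      rw [rec' m (by omega), i1, i2 hm]
      push_cast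
      ring
  have h1 : padSeq n v 1 = 0 := by
    have := (prog n le_rfl).1
    rw [hN] at this
    exact (mul_eq_zero.1 this.symm).resolve_left hn
  apply hv
  funext i
  rw [← padSeq_succ n v i, (prog _ (by omega)).1, h1, mul_zero, Pi.zero_apply]

/-- The form is even because `A = B + Bᵗ` for an integral upper triangular `B`. -/
theorem two_dvd_qf (n : ℕ) (k : Fin (n - 1) → ℤ) : 2 ∣ qf n k := by
  let B : Fin (n - 1) → Fin (n - 1) → ℤ := fun i j =>
    if (i : ℕ) = j then 1 else if (i : ℕ) + 1 = j then -1 else 0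
  have hAB : ∀ i j, cartan n i j = B i j + B j i := fun i j => by
    simp only [cartan, Matrix.of_apply, B]
    split_ifs <;> first | rfl | omega
  refine ⟨∑ i, ∑ j, k i * B i j * k j, ?_⟩
  simp only [qf, hAB, mul_add, add_mul, Finset.sum_add_distrib]
  rw [Finset.sum_comm (f := fun i j => k i * B j i * k j), two_mul]
  congr 1
  refine Finset.sum_congr rfl fun i _ => Finset.sum_congr rfl fun j _ => by ring

theorem qf_cast (n : ℕ) (k : Fin (n - 1) → ℤ) :
    ((qf n k : ℤ) : R) = (fun i => (k i : R)) ⬝ᵥ (cartanR R n).mulVec (fun i => (k i : R)) := by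
  simp only [qf, dotProduct, Matrix.mulVec, cartanR, Matrix.map_apply, Finset.mul_sum]
  push_cast
  simp only [mul_assoc]

end Cartan

/-! ### Completing the square -/

/-- The sum of the coordinates of `2ρ`, where `2ρ` solves `A (2ρ) = (2, …, 2)`. -/
theorem sum_rho (n : ℕ) (hn : 1 ≤ n) :
    ∑ i : Fin (n - 1), (((i : ℕ) : ℤ) + 1) * (n - 1 - (i : ℕ)) = n * ((n : ℤ) ^ 2 - 1) / 6 := by
  -- the partial sums need a free upper end, since `n` also occurs in the summand
  have h : ∀ m : ℕ, 6 * ∑ i ∈ Finset.range m, ((i : ℤ) + 1) * (n - 1 - i) =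
      m * (m + 1) * (3 * n - 2 * m - 1) := fun m => by
    induction m with
    | zero => simp
    | succ m ih => rw [Finset.sum_range_succ, mul_add, ih]; push_cast; ring
  rw [Fin.sum_univ_eq_sum_range (fun i => ((i : ℤ) + 1) * (n - 1 - i)) (n - 1)]
  symm
  apply Int.ediv_eq_of_eq_mul_right (by norm_num)
  rw [h, Nat.cast_sub hn]
  push_cast
  ring

theorem zetaC_zpow (r : ℕ) [NeZero r] (m : ℤ) :
    zetaC r ^ m = ZMod.stdAddChar (N := r) (m : ZMod r) := by
  rw [ZMod.stdAddChar_coe, zetaC, ← Complex.exp_int_mul]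
  congr 1
  ring

/-- Completing the square in `G(b)`: the linear term is absorbed by the translation by `ρ`, where
`A ρ = (1, …, 1)`. -/
theorem gaussG_eq (n r : ℕ) (hn : 2 ≤ n) [Fact r.Prime] (h2 : (2 : ZMod r) ≠ 0) (b : ℤ) :
    gaussG n r b = ZMod.stdAddChar (N := r)
        (-(b : ZMod r) / 4 * ((n * ((n : ℤ) ^ 2 - 1) / 6 : ℤ) : ZMod r)) *
      ∑ k : Fin (n - 1) → ZMod r,
        ZMod.stdAddChar (N := r) ((b : ZMod r) / 2 * (k ⬝ᵥ (cartanR (ZMod r) n).mulVec k)) := by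
  set ψ := ZMod.stdAddChar (N := r)
  set M := cartanR (ZMod r) n with hMdef
  have h4 : (4 : ZMod r) ≠ 0 := by
    rw [show (4 : ZMod r) = 2 * 2 by norm_num]; exact mul_ne_zero h2 h2
  let f : ℕ → ZMod r := fun m => m * (n - m) / 2
  let ρ : Fin (n - 1) → ZMod r := fun i => f (i + 1)
  have hρ : M.mulVec ρ = fun _ => 1 := by
    funext i
    have := cartan_row n f (by simp [f]) (by simp [f]) i
    simp only [Matrix.mulVec, dotProduct, hMdef, cartanR, Matrix.map_apply, ρ]
    rw [this]
    simp only [f]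
    push_cast
    field_simp
    ring
  have hsum : 2 * ∑ i, ρ i = ((n * ((n : ℤ) ^ 2 - 1) / 6 : ℤ) : ZMod r) := by
    rw [← sum_rho n (by omega), Finset.mul_sum]
    push_cast
    refine Finset.sum_congr rfl fun i _ => ?_
    simp only [ρ, f]
    push_cast
    field_simp
    ring
  have hsq : ∀ k : Fin (n - 1) → ZMod r, (k + ρ) ⬝ᵥ M.mulVec (k + ρ) =
      k ⬝ᵥ M.mulVec k + 2 * ∑ i, k i + ∑ i, ρ i := fun k => by
    have hx : ρ ⬝ᵥ M.mulVec k = ∑ i, k i := by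
      rw [Matrix.dotProduct_mulVec, ← Matrix.mulVec_transpose, (cartanR_isSymm n).eq, hρ]
      simp [dotProduct]
    have hy : ∀ x : Fin (n - 1) → ZMod r, x ⬝ᵥ M.mulVec ρ = ∑ i, x i := fun x => by
      rw [hρ]; simp [dotProduct]
    rw [Matrix.mulVec_add, add_dotProduct, dotProduct_add, dotProduct_add, hx, hy, hy]
    ring
  have hbij : Function.Bijective (fun x : Fin r => ((x : ℕ) : ZMod r)) := by
    rw [Fintype.bijective_iff_injective_and_card]
    refine ⟨fun x y h => ?_, by simp [ZMod.card]⟩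
    have := (ZMod.natCast_eq_natCast_iff' _ _ _).1 h
    rw [Nat.mod_eq_of_lt x.2, Nat.mod_eq_of_lt y.2] at this
    exact Fin.ext this
  rw [gaussG, Finset.mul_sum]
  refine Fintype.sum_equiv
    ((Equiv.arrowCongr (Equiv.refl _) (Equiv.ofBijective _ hbij)).trans (Equiv.addRight ρ))
    _ _ fun k => ?_
  set k' : Fin (n - 1) → ZMod r := fun i => ((k i : ℕ) : ZMod r) with hk'
  have hk : ((Equiv.arrowCongr (Equiv.refl _) (Equiv.ofBijective _ hbij)).trans
      (Equiv.addRight ρ)) k = k' + ρ := rfl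
  rw [hk, hsq, zetaC_zpow, ← AddChar.map_add_eq_mul]
  congr 1
  obtain ⟨q, hq⟩ := two_dvd_qf n (fun i => ((k i : ℕ) : ℤ))
  have hqc := congrArg (Int.cast : ℤ → ZMod r) hq
  rw [qf_cast] at hqc
  simp only [Int.cast_natCast, Int.cast_mul, Int.cast_ofNat] at hqc
  rw [hq, Int.mul_ediv_cancel_left _ (by norm_num), ← hsum]
  change k' ⬝ᵥ M.mulVec k' = _ at hqc
  rw [hqc]
  push_cast
  simp only [hk']
  field_simp
  ring

theorem stmt3 (n r : ℕ) (hn : 2 ≤ n) (hr : r.Prime) (hodd : Odd r) (hrn : n < r)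
    (b : ℤ) (hb : ¬ ((r : ℤ) ∣ b)) (c : ℤ)
    (hc : Int.ModEq (r : ℤ) (4 * c) ((b.sign - b) * ((n : ℤ) * ((n : ℤ) ^ 2 - 1) / 6))) :
    gaussG n r b =
      ((@legendreSym r ⟨hr⟩ |b| : ℤ) : ℂ) ^ (n - 1) * zetaC r ^ c *
        gaussG n r b.sign := by
  have : Fact r.Prime := ⟨hr⟩
  have hr2 : r ≠ 2 := by rintro rfl; exact absurd hodd (by decide)
  have hF : ringChar (ZMod r) ≠ 2 := by rwa [ZMod.ringChar_zmod_n]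
  have h2 : (2 : ZMod r) ≠ 0 := Ring.two_ne_zero hF
  have h4 : (4 : ZMod r) ≠ 0 := by
    rw [show (4 : ZMod r) = 2 * 2 by norm_num]; exact mul_ne_zero h2 h2
  have hbF : (b : ZMod r) ≠ 0 := by rwa [Ne, ZMod.intCast_zmod_eq_zero_iff_dvd]
  have hb' : (b : ZMod r) = ((|b| : ℤ) : ZMod r) * ((b.sign : ℤ) : ZMod r) := by
    rw [← Int.cast_mul, mul_comm, Int.sign_mul_abs]
  have habs : ((|b| : ℤ) : ZMod r) ≠ 0 := fun h => hbF (by rw [hb', h, zero_mul])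
  have hsgn : ((b.sign : ℤ) : ZMod r) ≠ 0 := fun h => hbF (by rw [hb', h, mul_zero])
  have hnF : (n : ZMod r) ≠ 0 := by
    rw [Ne, ZMod.natCast_eq_zero_iff]
    exact Nat.not_dvd_of_pos_of_lt (by omega) hrn
  have hS := sum_matrix hF _ (ZMod.isPrimitive_stdAddChar r) (cartanR (ZMod r) n)
    (cartanR_isSymm n) (det_cartan_ne_zero n hnF) habs (div_ne_zero hsgn h2)
  rw [← mul_div_assoc, ← hb'] at hS
  have hc' := (ZMod.intCast_eq_intCast_iff _ _ _).2 hc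
  rw [Int.cast_mul, Int.cast_mul, Int.cast_sub, Int.cast_ofNat] at hc'
  have hcc : (c : ZMod r) =
      (b.sign - b) / 4 * ((n * ((n : ℤ) ^ 2 - 1) / 6 : ℤ) : ZMod r) := by
    field_simp
    linear_combination hc'
  have hψ : ZMod.stdAddChar (N := r)
        (-(b : ZMod r) / 4 * ((n * ((n : ℤ) ^ 2 - 1) / 6 : ℤ) : ZMod r)) =
      zetaC r ^ c * ZMod.stdAddChar (N := r)
        (-((b.sign : ℤ) : ZMod r) / 4 * ((n * ((n : ℤ) ^ 2 - 1) / 6 : ℤ) : ZMod r)) := by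
    rw [zetaC_zpow, ← AddChar.map_add_eq_mul, hcc]
    congr 1
    ring
  rw [gaussG_eq n r hn h2, gaussG_eq n r hn h2, hS, hψ, legendreSym]
  ring
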